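/- Let n ≥ 3 and let 𝒢 be a degree-doubling family of 2-regular simple graphs on Fin n such that all members of 𝒢 have the same multiset of connected-component sizes (i.e., for any two members F, G ∈ 𝒢, the multiset of cardinalities of the connected components of F equals that of G). Then |𝒢| · ⌊n/3⌋! ≤ n · n!. -/

import Mathlib

/-!
Every 2-regular graph has a spanning subgraph whose components are paths on two or three vertices:
a minimal edge cover is a forest of stars, and a star inside a 2-regular graph has at most two
leaves (`exists_isCover`). Two members of a degree-doubling family cannot contain the same such
subgraph, since otherwise every vertex would have a common neighbour in both members.

Label the subgraph, if it has `a` components on two vertices and `b` on three vertices, by a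
bijection from the standard vertex set `Model a b`. Each subgraph has at least
`a! * b! * 2 ^ a * 2 ^ b` labellings (permute components of equal size and reflect each path),
and there are `n!` bijections in all, so at most `n! / (a! * b! * 2 ^ (a + b))` members of the
family have a cover of type `(a, b)` (`card_mul_le`). Now
`a! * b! * 2 ^ (a + b) ≥ (a + b)! ≥ (n / 3)!`, because `(a + b).choose a ≤ 2 ^ (a + b)` and
`n = 2 * a + 3 * b`. Finally `b < n` and `b` determines `a`, so there are at most `n` types.
-/

open SimpleGraph

/-- The degree of a vertex `v` in a simple graph `G` on `Fin n`. -/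
noncomputable def deg {n : ℕ} (G : SimpleGraph (Fin n)) (v : Fin n) : ℕ :=
  Nat.card (G.neighborSet v)

/-- A Hamiltonian cycle on `Fin n`: a connected, 2-regular simple graph. -/
def IsHamCycle {n : ℕ} (G : SimpleGraph (Fin n)) : Prop :=
  G.Connected ∧ ∀ v, deg G v = 2

/-- A family of graphs is degree-doubling if the union of any two distinct
members has a vertex of degree 4. -/
def DegreeDoubling {n : ℕ} (𝒢 : Finset (SimpleGraph (Fin n))) : Prop :=
  ∀ F ∈ 𝒢, ∀ G ∈ 𝒢, F ≠ G → ∃ v, deg (F ⊔ G) v = 4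

/-- The vertex set of a disjoint union of `a` paths on two vertices and `b` paths on three
vertices. In a path on three vertices `none` is the middle vertex, `some false` and `some true` are
the two ends. -/
abbrev Model (a b : ℕ) : Type := (Fin a × Bool) ⊕ (Fin b × Option Bool)

/-- The labelling `e` carries the standard disjoint union of paths on `Model a b` into `G`. -/
def IsCover {n a b : ℕ} (e : Model a b ≃ Fin n) (G : SimpleGraph (Fin n)) : Prop :=
  (∀ i x, G.Adj (e (.inl (i, x))) (e (.inl (i, !x)))) ∧
    ∀ i x, G.Adj (e (.inr (i, none))) (e (.inr (i, some x)))

/-- A minimal edge cover of a graph without isolated vertices: every edge of the cover has an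
endpoint of degree one, that is, the cover is a star forest. -/
lemma exists_star_cover {V : Type*} [Finite V] (G : SimpleGraph V) (hG : ∀ v, ∃ w, G.Adj v w) :
    ∃ H ≤ G, (∀ v, ∃ w, H.Adj v w) ∧
      ∀ u v, H.Adj u v → (∀ w, H.Adj u w → w = v) ∨ (∀ w, H.Adj v w → w = u) := by
  obtain ⟨H, ⟨hHG, hH⟩, hmin⟩ := Set.Finite.exists_minimal
    (s := {H : SimpleGraph V | H ≤ G ∧ ∀ v, ∃ w, H.Adj v w}) (Set.toFinite _) ⟨G, le_rfl, hG⟩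
  refine ⟨H, hHG, hH, fun u v huv => ?_⟩
  by_contra! hcon
  obtain ⟨⟨u', hu', hu'v⟩, v', hv', hv'u⟩ := hcon
  have hle : H.deleteEdges {s(u, v)} ≤ H := H.deleteEdges_le _
  have hdel : ∀ x, ∃ w, (H.deleteEdges {s(u, v)}).Adj x w := by
    intro x
    simp only [SimpleGraph.deleteEdges_adj, Set.mem_singleton_iff, Sym2.eq_iff]
    by_cases hxu : x = u
    · subst hxu
      exact ⟨u', hu', by grind [huv.ne]⟩
    by_cases hxv : x = v
    · subst hxv
      exact ⟨v', hv', by grind [huv.ne]⟩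
    obtain ⟨w, hw⟩ := hH x
    exact ⟨w, hw, by grind⟩
  have := hmin ⟨hle.trans hHG, hdel⟩ hle huv
  simp at this

/-- The components of a minimal edge cover of a 2-regular graph are stars with one or two leaves,
that is, paths on two or three vertices. -/
lemma exists_isCover {n : ℕ} (G : SimpleGraph (Fin n)) (hG : ∀ v, deg G v = 2) :
    ∃ a b, ∃ e : Model a b ≃ Fin n, IsCover e G := by
  have hN : ∀ v, ∃ x y, G.neighborSet v = {x, y} := fun v => by
    obtain ⟨x, y, -, h⟩ := Set.ncard_eq_two.mp (hG v)
    exact ⟨x, y, h⟩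
  obtain ⟨H, hHG, hH, hstar⟩ := exists_star_cover G fun v => by
    obtain ⟨x, y, h⟩ := hN v
    exact ⟨x, by rw [← SimpleGraph.mem_neighborSet, h]; simp⟩
  -- `f v` and `g v` are the neighbours of `v` in `H`; they agree when `v` has degree one.
  have hfg : ∀ v, ∃ x y, H.Adj v x ∧ H.Adj v y ∧ ∀ w, H.Adj v w → w = x ∨ w = y := by
    intro v
    obtain ⟨x, y, h⟩ := hN v
    have hxy : ∀ w, H.Adj v w → w = x ∨ w = y := fun w hw => by
      have : w ∈ G.neighborSet v := hHG hw
      simpa [h] using this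
    obtain ⟨z, hz⟩ := hH v
    by_cases hx : H.Adj v x <;> by_cases hy : H.Adj v y
    · exact ⟨x, y, hx, hy, hxy⟩
    · exact ⟨x, x, hx, hx, by grind⟩
    · exact ⟨y, y, hy, hy, by grind⟩
    · grind
  choose f g hf hg hfg using hfg
  -- The centres of the stars; a single edge has its smaller endpoint as centre.
  obtain ⟨A, hA⟩ : ∃ A : Fin n → Prop,
      ∀ v, A v ↔ f v = g v ∧ f (f v) = g (f v) ∧ v < f v := ⟨_, fun _ => Iff.rfl⟩
  obtain ⟨B, hB⟩ : ∃ B : Fin n → Prop, ∀ v, B v ↔ f v ≠ g v := ⟨_, fun _ => Iff.rfl⟩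
  have hleaf : ∀ v w, H.Adj v w → (A v ∨ B v) → f w = v ∧ g w = v ∧ ¬ A w ∧ ¬ B w := by
    intro v w hvw hv
    have h1 := hstar v w hvw
    have h2 := hfg v w hvw
    have h3 := hfg w v hvw.symm
    have h4 := hf v
    have h5 := hg v
    have h6 := hf w
    have h7 := hg w
    simp only [hA, hB] at hv ⊢
    grind
  have hcentre : ∀ v, ¬ A v → ¬ B v → A (f v) ∨ B (f v) := by
    intro v hvA hvB
    have h3 := hfg (f v) v (hf v).symm
    have h4 := (hf v).ne
    simp only [hA, hB] at hvA hvB ⊢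
    grind
  classical
  obtain ⟨eA⟩ := Nonempty.intro (Fintype.equivFin {v // A v}).symm
  obtain ⟨eB⟩ := Nonempty.intro (Fintype.equivFin {v // B v}).symm
  let φ : Model (Fintype.card {v // A v}) (Fintype.card {v // B v}) → Fin n := fun p =>
    match p with
    | .inl (i, false) => eA i
    | .inl (i, true) => f (eA i)
    | .inr (i, none) => eB i
    | .inr (i, some false) => f (eB i)
    | .inr (i, some true) => g (eB i)
  have hAB : ∀ v, A v → ¬ B v := fun v hvA hvB => (hB v).1 hvB ((hA v).1 hvA).1
  have hφ : Function.Bijective φ := by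
    constructor
    · have PA := fun i => (eA i).2
      have PB := fun i => (eB i).2
      have IA : ∀ i j, (eA i : Fin n) = eA j → i = j := fun i j h => eA.injective (Subtype.ext h)
      have IB : ∀ i j, (eB i : Fin n) = eB j → i = j := fun i j h => eB.injective (Subtype.ext h)
      have LA := fun i => hleaf _ _ (hf (eA i)) (.inl (PA i))
      have LB := fun i => hleaf _ _ (hf (eB i)) (.inr (PB i))
      have LB' := fun i => hleaf _ _ (hg (eB i)) (.inr (PB i))
      have PB' : ∀ i, f (eB i) ≠ g (eB i) := fun i => (hB _).1 (PB i)
      rintro (⟨i, _ | _⟩ | ⟨i, _ | _ | _⟩) (⟨j, _ | _⟩ | ⟨j, _ | _ | _⟩) h <;>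
        simp only [φ] at h <;> grind
    · intro v
      by_cases hvA : A v
      · exact ⟨.inl (eA.symm ⟨v, hvA⟩, false), by simp [φ]⟩
      by_cases hvB : B v
      · exact ⟨.inr (eB.symm ⟨v, hvB⟩, none), by simp [φ]⟩
      have hback := hfg (f v) v (hf v).symm
      rcases hcentre v hvA hvB with h | h
      · refine ⟨.inl (eA.symm ⟨f v, h⟩, true), ?_⟩
        have := ((hA _).1 h).1
        simp only [φ, Equiv.apply_symm_apply]
        grind
      · rcases hback with h' | h'
        · exact ⟨.inr (eB.symm ⟨f v, h⟩, some false), by simp [φ, ← h']⟩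
        · exact ⟨.inr (eB.symm ⟨f v, h⟩, some true), by simp [φ, ← h']⟩
  refine ⟨_, _, Equiv.ofBijective φ hφ, ?_, ?_⟩
  · rintro i (_ | _)
    · exact hHG (hf _)
    · exact (hHG (hf _)).symm
  · rintro i (_ | _)
    · exact hHG (hf _)
    · exact hHG (hg _)

/-- Automorphisms of the standard disjoint union of paths: `p.1` and `p.2.1` permute the components
on two and three vertices, and `p.2.2.1`, `p.2.2.2` reflect individual paths. -/
def shuffle {a b : ℕ}
    (p : Equiv.Perm (Fin a) × Equiv.Perm (Fin b) × (Fin a → Equiv.Perm Bool) ×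
      (Fin b → Equiv.Perm Bool)) : Equiv.Perm (Model a b) :=
  Equiv.sumCongr (Equiv.prodShear p.1 p.2.2.1)
    (Equiv.prodShear p.2.1 fun i => Equiv.optionCongr (p.2.2.2 i))

lemma shuffle_injective {a b : ℕ} : Function.Injective (shuffle (a := a) (b := b)) := by
  rintro ⟨π, ρ, s, t⟩ ⟨π', ρ', s', t'⟩ h
  have hl : ∀ i x, π i = π' i ∧ s i x = s' i x := fun i x => by
    simpa [shuffle] using DFunLike.congr_fun h (.inl (i, x))
  have hr : ∀ i x, ρ i = ρ' i ∧ t i x = t' i x := fun i x => by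
    simpa [shuffle] using DFunLike.congr_fun h (.inr (i, some x))
  simp only [Prod.mk.injEq]
  exact ⟨Equiv.ext fun i => (hl i true).1, Equiv.ext fun i => (hr i true).1,
    funext fun i => Equiv.ext fun x => (hl i x).2, funext fun i => Equiv.ext fun x => (hr i x).2⟩

lemma IsCover.shuffle {n a b : ℕ} {e : Model a b ≃ Fin n} {G : SimpleGraph (Fin n)}
    (h : IsCover e G) (p) : IsCover ((shuffle p).trans e) G := by
  have hnot : ∀ (σ : Equiv.Perm Bool) x, σ (!x) = !σ x := by decide
  constructor
  · intro i x
    simpa [_root_.shuffle, hnot] using h.1 (p.1 i) (p.2.2.1 i x)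
  · intro i x
    simpa [_root_.shuffle] using h.2 (p.2.1 i) (p.2.2.2 i x)

lemma IsCover.exists_common_neighbor {n a b : ℕ} {e : Model a b ≃ Fin n}
    {F G : SimpleGraph (Fin n)} (hF : IsCover e F) (hG : IsCover e G) (v : Fin n) :
    ∃ w, F.Adj v w ∧ G.Adj v w := by
  obtain ⟨p, rfl⟩ := e.surjective v
  obtain ⟨i, x⟩ | ⟨i, _ | x⟩ := p
  · exact ⟨_, hF.1 i x, hG.1 i x⟩
  · exact ⟨_, hF.2 i true, hG.2 i true⟩
  · exact ⟨_, (hF.2 i x).symm, (hG.2 i x).symm⟩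

lemma deg_sup_ne_four {n : ℕ} {F G : SimpleGraph (Fin n)} {v w : Fin n} (hF : deg F v = 2)
    (hG : deg G v = 2) (hFw : F.Adj v w) (hGw : G.Adj v w) : deg (F ⊔ G) v ≠ 4 := by
  have h1 := Set.ncard_union_add_ncard_inter (F.neighborSet v) (G.neighborSet v)
  have h2 : 0 < (F.neighborSet v ∩ G.neighborSet v).ncard :=
    (Set.ncard_pos (Set.toFinite _)).2 ⟨w, hFw, hGw⟩
  have h3 : deg (F ⊔ G) v = (F.neighborSet v ∪ G.neighborSet v).ncard := by
    rw [← SimpleGraph.neighborSet_sup]; rfl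
  change (F.neighborSet v).ncard = 2 at hF
  change (G.neighborSet v).ncard = 2 at hG
  omega

/-- A labelling determines the member it covers, and each member has at least
`a! * b! * 2 ^ a * 2 ^ b` labellings, so double counting labellings bounds the family. -/
lemma card_mul_le {n a b : ℕ} (𝒢 : Finset (SimpleGraph (Fin n)))
    (hreg : ∀ G ∈ 𝒢, ∀ v, deg G v = 2) (hdd : DegreeDoubling 𝒢)
    (hcov : ∀ G ∈ 𝒢, ∃ e : Model a b ≃ Fin n, IsCover e G) :
    𝒢.card * (a.factorial * (b.factorial * (2 ^ a * 2 ^ b))) ≤ n.factorial := by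
  obtain rfl | ⟨G₀, hG₀⟩ := 𝒢.eq_empty_or_nonempty
  · simp
  obtain ⟨e₀, -⟩ := hcov G₀ hG₀
  choose e he using fun G : 𝒢 => hcov G.1 G.2
  have hinj : Function.Injective fun q : 𝒢 × (Equiv.Perm (Fin a) × Equiv.Perm (Fin b) ×
      (Fin a → Equiv.Perm Bool) × (Fin b → Equiv.Perm Bool)) => (shuffle q.2).trans (e q.1) := by
    rintro ⟨F, p⟩ ⟨G, q⟩ h
    simp only at h
    have hFG : F = G := by
      by_contra hne
      obtain ⟨v, hv⟩ := hdd F F.2 G G.2 fun h' => hne (Subtype.ext h')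
      have hG := (he G).shuffle q
      rw [← h] at hG
      obtain ⟨w, hFw, hGw⟩ := ((he F).shuffle p).exists_common_neighbor hG v
      exact deg_sup_ne_four (hreg F F.2 v) (hreg G G.2 v) hFw hGw hv
    subst hFG
    have : shuffle p = shuffle q := Equiv.ext fun x => (e F).injective (DFunLike.congr_fun h x)
    rw [shuffle_injective this]
  have hcard := Fintype.card_le_of_injective _ hinj
  rw [Fintype.card_equiv e₀, Fintype.card_congr e₀] at hcard
  simpa [Fintype.card_perm] using hcard

lemma factorial_add_le (a b : ℕ) :
    (a + b).factorial ≤ a.factorial * (b.factorial * (2 ^ a * 2 ^ b)) := by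
  rw [← Nat.add_choose_mul_factorial_mul_factorial a b, ← pow_add]
  calc _ ≤ 2 ^ (a + b) * a.factorial * b.factorial := by
        gcongr
        exact Nat.choose_le_two_pow _ _
    _ = _ := by ring

theorem stmt_17 (n : ℕ) (hn : 3 ≤ n) (𝒢 : Finset (SimpleGraph (Fin n)))
    (hreg : ∀ G ∈ 𝒢, ∀ v, deg G v = 2) (hdd : DegreeDoubling 𝒢)
    (hsame : ∀ F ∈ 𝒢, ∀ G ∈ 𝒢, ∃ e : F.ConnectedComponent ≃ G.ConnectedComponent,
      ∀ c : F.ConnectedComponent, Nat.card ((e c).supp) = Nat.card c.supp) :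
    𝒢.card * Nat.factorial (n / 3) ≤ n * Nat.factorial n := by
  classical
  have hcov : ∀ G : SimpleGraph (Fin n), ∃ b, G ∈ 𝒢 →
      ∃ a, 2 * a + 3 * b = n ∧ ∃ e : Model a b ≃ Fin n, IsCover e G := by
    intro G
    by_cases hG : G ∈ 𝒢
    · obtain ⟨a, b, e, he⟩ := exists_isCover G (hreg G hG)
      have := Fintype.card_congr e
      simp at this
      exact ⟨b, fun _ => ⟨a, by omega, e, he⟩⟩
    · exact ⟨0, fun h => absurd h hG⟩
  choose t ht using hcov
  have hmaps : ∀ G ∈ 𝒢, t G ∈ Finset.range n := fun G hG => by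
    obtain ⟨a, h, -⟩ := ht G hG
    rw [Finset.mem_range]
    omega
  have hfib : ∀ b ∈ Finset.range n,
      (𝒢.filter fun G => t G = b).card ≤ n.factorial / (n / 3).factorial := by
    intro b _
    rw [Nat.le_div_iff_mul_le (Nat.factorial_pos _)]
    obtain h | ⟨G₀, hG₀⟩ := (𝒢.filter fun G => t G = b).eq_empty_or_nonempty
    · simp [h]
    obtain ⟨hG₀', rfl⟩ := Finset.mem_filter.1 hG₀
    obtain ⟨a, hab, -⟩ := ht G₀ hG₀'
    calc _ ≤ _ * (a.factorial * ((t G₀).factorial * (2 ^ a * 2 ^ t G₀))) :=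
          Nat.mul_le_mul_left _
            ((Nat.factorial_le (by omega)).trans (factorial_add_le a (t G₀)))
      _ ≤ _ := by
        refine card_mul_le _ (fun G hG => hreg G (Finset.mem_filter.1 hG).1)
          (fun F hF G hG => hdd F (Finset.mem_filter.1 hF).1 G (Finset.mem_filter.1 hG).1) ?_
        intro G hG
        obtain ⟨hG, hb⟩ := Finset.mem_filter.1 hG
        obtain ⟨a', h', he⟩ := ht G hG
        rw [hb] at h' he
        obtain rfl : a' = a := by omega
        exact he
  have h := Finset.card_le_mul_card_image_of_maps_to hmaps _ hfib
  rw [Finset.card_range] at h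
  calc _ ≤ n.factorial / (n / 3).factorial * n * (n / 3).factorial := Nat.mul_le_mul_right _ h
    _ = n * (n.factorial / (n / 3).factorial * (n / 3).factorial) := by ring
    _ ≤ _ := Nat.mul_le_mul_left _ (Nat.div_mul_le_self _ _)
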